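/- Let d ≥ 4 be an integer and let C, ε be positive reals. Then there exist γ with 0 < γ < ε and n₀ such that the following holds. Let D be a digraph with n ≥ n₀ vertices, m ≤ Cn arcs, and minimum outdegree at least d, and let X, Y be a partition of V(D) with |X| ≤ γn, e(X) = 0, and d(y) ≤ γn for every y ∈ Y. Set θ := min{|θ(X₁,X₂)| : X₁,X₂ a partition of X} and X' := {x ∈ X : s(x) ≥ θ}. If |X'| = 1, then V(D) admits a bipartition V₁, V₂ with min{e(V₁,V₂), e(V₂,V₁)} ≥ ((d−1)/(2(2d−1)) − ε)·m. -/

import Mathlib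

open Finset

/-- Number of arcs of the digraph `A` directed from a vertex of `S` to a vertex of `T`. -/
def dArcs {V : Type} [Fintype V] [DecidableEq V] (A : V → V → Prop) [DecidableRel A]
    (S T : Finset V) : ℕ :=
  ((S ×ˢ T).filter fun p => A p.1 p.2).card

/-- Outdegree of `x`. -/
def outDeg {V : Type} [Fintype V] (A : V → V → Prop) [DecidableRel A] (x : V) : ℕ :=
  (Finset.univ.filter fun y => A x y).card

/-- Indegree of `x`. -/
def inDeg {V : Type} [Fintype V] (A : V → V → Prop) [DecidableRel A] (x : V) : ℕ :=
  (Finset.univ.filter fun y => A y x).card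

/-- Degree of `x`: outdegree plus indegree. -/
def deg {V : Type} [Fintype V] (A : V → V → Prop) [DecidableRel A] (x : V) : ℕ :=
  outDeg A x + inDeg A x

/-- `s(x) = max{d⁺(x) − d⁻(x), d⁻(x) − d⁺(x)}`. -/
def sVal {V : Type} [Fintype V] (A : V → V → Prop) [DecidableRel A] (x : V) : ℤ :=
  max ((outDeg A x : ℤ) - (inDeg A x : ℤ)) ((inDeg A x : ℤ) - (outDeg A x : ℤ))

/-- The gap `θ(X₁,X₂) = (e(X₁,Y)+e(Y,X₂)) − (e(X₂,Y)+e(Y,X₁))`. -/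
def gap {V : Type} [Fintype V] [DecidableEq V] (A : V → V → Prop) [DecidableRel A]
    (X₁ X₂ Y : Finset V) : ℤ :=
  ((dArcs A X₁ Y : ℤ) + (dArcs A Y X₂ : ℤ)) - ((dArcs A X₂ Y : ℤ) + (dArcs A Y X₁ : ℤ))

/-- Weight of the pairs separated by the signing `σ` inside `S`, minus the weight of the others. -/
def signCut {V : Type} (w : V → V → ℝ) (σ : V → ℝ) (S : Finset V) : ℝ :=
  -∑ u ∈ S, ∑ v ∈ S, w u v * σ u * σ v

/-- The signed sum of `s` over `S`. -/
def signSum {V : Type} (s : V → ℝ) (σ : V → ℝ) (S : Finset V) : ℝ :=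
  ∑ v ∈ S, s v * σ v

/-- Some signing of `S` has value at least `t`, where the value is the weighted cut excess
penalised by the square of the signed sum and corrected by the additive allowance `κ * D`. -/
def Gains {V : Type} (w : V → V → ℝ) (s D : V → ℝ) (κ μ : ℝ) (S : Finset V) (t : ℝ) : Prop :=
  ∃ σ : V → ℝ, (∀ v, σ v = 1 ∨ σ v = -1) ∧
    t ≤ signCut w σ S - (signSum s σ S) ^ 2 / μ + κ * ∑ v ∈ S, D v

section Gains

variable {V : Type} {w : V → V → ℝ} {s D : V → ℝ} {κ μ : ℝ}

theorem signCut_congr {σ τ : V → ℝ} {S : Finset V} (h : ∀ v ∈ S, σ v = τ v) :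
    signCut w σ S = signCut w τ S := by
  unfold signCut
  congr 1
  refine sum_congr rfl fun u hu => sum_congr rfl fun v hv => ?_
  rw [h u hu, h v hv]

theorem signSum_congr {σ τ : V → ℝ} {S : Finset V} (h : ∀ v ∈ S, σ v = τ v) :
    signSum s σ S = signSum s τ S :=
  sum_congr rfl fun v hv => by rw [h v hv]

theorem signCut_smul {σ : V → ℝ} {S : Finset V} {c : ℝ} (hc : c = 1 ∨ c = -1) :
    signCut w (fun v => c * σ v) S = signCut w σ S := by
  rcases hc with rfl | rfl <;> simp [signCut]

theorem signSum_smul {σ : V → ℝ} {S : Finset V} (c : ℝ) :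
    signSum s (fun v => c * σ v) S = c * signSum s σ S := by
  unfold signSum
  rw [mul_sum]
  exact sum_congr rfl fun v _ => by ring

theorem Gains.mono {S : Finset V} {t t' : ℝ} (h : Gains w s D κ μ S t) (ht : t' ≤ t) :
    Gains w s D κ μ S t' := by
  obtain ⟨σ, hσ, h⟩ := h
  exact ⟨σ, hσ, ht.trans h⟩

theorem gains_empty : Gains w s D κ μ ∅ 0 :=
  ⟨fun _ => 1, fun _ => Or.inl rfl, by simp [signCut, signSum]⟩

theorem gains_single (hw : ∀ v, w v v = 0) (v : V) :
    Gains w s D κ μ {v} (κ * D v - s v ^ 2 / μ) :=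
  ⟨fun _ => 1, fun _ => Or.inl rfl, by simp [signCut, signSum, hw]⟩

variable [DecidableEq V]

theorem signCut_union {σ : V → ℝ} {S T : Finset V} (hST : Disjoint S T) :
    signCut w σ (S ∪ T) = signCut w σ S + signCut w σ T
      - ∑ u ∈ S, ∑ v ∈ T, (w u v + w v u) * (σ u * σ v) := by
  unfold signCut
  have h : ∑ u ∈ T, ∑ v ∈ S, w u v * σ u * σ v = ∑ u ∈ S, ∑ v ∈ T, w v u * σ v * σ u :=
    sum_comm
  have h' : ∑ u ∈ S, ∑ v ∈ T, (w u v + w v u) * (σ u * σ v)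
      = ∑ u ∈ S, ∑ v ∈ T, w u v * σ u * σ v + ∑ u ∈ S, ∑ v ∈ T, w v u * σ v * σ u := by
    simp only [← sum_add_distrib]
    exact sum_congr rfl fun u _ => sum_congr rfl fun v _ => by ring
  rw [h', sum_union hST]
  simp only [sum_union hST, sum_add_distrib]
  rw [h]
  ring

/-- Signings of two disjoint sets glue, after possibly flipping the second, so that the
interaction between the two sets is favourable. -/
theorem exists_glued_signing {S T : Finset V} (hST : Disjoint S T) {σ τ : V → ℝ}
    (hσ : ∀ v, σ v = 1 ∨ σ v = -1) (hτ : ∀ v, τ v = 1 ∨ τ v = -1) (ν : ℝ) :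
    ∃ ρ : V → ℝ, ∃ c : ℝ, (∀ v, ρ v = 1 ∨ ρ v = -1) ∧ (c = 1 ∨ c = -1) ∧
      (∀ v ∈ S, ρ v = σ v) ∧ (∀ v ∈ T, ρ v = c * τ v) ∧
      signCut w σ S + signCut w τ T + c * ν ≤ signCut w ρ (S ∪ T) := by
  set x := ∑ u ∈ S, ∑ v ∈ T, (w u v + w v u) * (σ u * τ v) with hx
  obtain ⟨c, hc, hcx⟩ : ∃ c : ℝ, (c = 1 ∨ c = -1) ∧ c * (ν + x) ≤ 0 := by
    rcases le_total (ν + x) 0 with h | h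
    · exact ⟨1, Or.inl rfl, by linarith⟩
    · exact ⟨-1, Or.inr rfl, by linarith⟩
  have hρS : ∀ v ∈ S, (if v ∈ S then σ v else c * τ v) = σ v := fun v hv => by simp [hv]
  have hρT : ∀ v ∈ T, (if v ∈ S then σ v else c * τ v) = c * τ v := fun v hv => by
    simp [disjoint_right.1 hST hv]
  refine ⟨fun v => if v ∈ S then σ v else c * τ v, c, fun v => ?_, hc, hρS, hρT, ?_⟩
  · rcases hc with rfl | rfl <;> rcases hσ v with h | h <;> rcases hτ v with h' | h' <;>
      by_cases hv : v ∈ S <;> simp [h, h', hv]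
  · rw [signCut_union hST, signCut_congr hρS, signCut_congr hρT, signCut_smul hc]
    have : ∑ u ∈ S, ∑ v ∈ T, (w u v + w v u) *
        ((if u ∈ S then σ u else c * τ u) * (if v ∈ S then σ v else c * τ v)) = c * x := by
      rw [hx, mul_sum]
      refine sum_congr rfl fun u hu => ?_
      rw [mul_sum]
      refine sum_congr rfl fun v hv => ?_
      rw [hρS u hu, hρT v hv]
      ring
    rw [this]
    linarith

theorem Gains.union {S T : Finset V} {a b : ℝ} (hST : Disjoint S T)
    (hS : Gains w s D κ μ S a) (hT : Gains w s D κ μ T b) :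
    Gains w s D κ μ (S ∪ T) (a + b) := by
  obtain ⟨σ, hσ, hS⟩ := hS
  obtain ⟨τ, hτ, hT⟩ := hT
  obtain ⟨ρ, c, hρ, hc, hρS, hρT, h⟩ := exists_glued_signing (w := w) hST hσ hτ
    (2 * signSum s σ S * signSum s τ T / μ)
  refine ⟨ρ, hρ, ?_⟩
  have hsum : signSum s ρ (S ∪ T) = signSum s σ S + c * signSum s τ T := by
    rw [← signSum_smul, ← signSum_congr hρS, ← signSum_congr hρT]
    exact sum_union hST
  have hc2 : c ^ 2 = 1 := by rcases hc with rfl | rfl <;> norm_num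
  have hsq : signSum s ρ (S ∪ T) ^ 2 / μ = signSum s σ S ^ 2 / μ + signSum s τ T ^ 2 / μ
      + c * (2 * signSum s σ S * signSum s τ T / μ) := by
    rw [hsum]
    linear_combination (signSum s τ T ^ 2 / μ) * hc2
  rw [hsq, sum_union hST]
  linarith

theorem Gains.of_sdiff {S P : Finset V} {a b t : ℝ} (hP : P ⊆ S)
    (hS : Gains w s D κ μ (S \ P) a) (hPb : Gains w s D κ μ P b) (ht : t ≤ a + b) :
    Gains w s D κ μ S t := by
  have := hS.union sdiff_disjoint hPb
  rw [sdiff_union_of_subset hP] at this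
  exact this.mono ht

theorem gains_fibers {ι : Type} [DecidableEq ι] (f : V → ι) (S : Finset V) (t : ι → ℝ)
    (I : Finset ι) (h : ∀ i ∈ I, Gains w s D κ μ (S.filter fun v => f v = i) (t i)) :
    Gains w s D κ μ (S.filter fun v => f v ∈ I) (∑ i ∈ I, t i) := by
  induction I using Finset.induction_on with
  | empty => simpa using gains_empty
  | insert i I hi ih =>
    have h1 := (h i (mem_insert_self _ _)).union (T := S.filter fun v => f v ∈ I) ?_
      (ih fun j hj => h j (mem_insert_of_mem hj))
    · rw [sum_insert hi]
      convert h1 using 1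
      ext v
      simp only [mem_filter, mem_insert, mem_union]
      tauto
    · rw [disjoint_left]
      intro v hv hv'
      simp only [mem_filter] at hv hv'
      exact hi (hv.2 ▸ hv'.2)

theorem gains_sum_single (hw : ∀ v, w v v = 0) (S : Finset V) :
    Gains w s D κ μ S (∑ v ∈ S, (κ * D v - s v ^ 2 / μ)) := by
  have := gains_fibers (w := w) (s := s) (D := D) (κ := κ) (μ := μ) id S
    (fun v => κ * D v - s v ^ 2 / μ) S fun v hv => by
      have h : (S.filter fun u => id u = v) = {v} := by
        ext u; simp only [mem_filter, mem_singleton, id]; constructor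
        · exact fun h => h.2
        · rintro rfl; exact ⟨hv, rfl⟩
      rw [h]; exact gains_single hw v
  simpa using this

theorem gains_pair (hw : ∀ v, w v v = 0) (hμ : 0 < μ) {u v : V} (huv : u ≠ v)
    (hu : 2 * s u ^ 2 ≤ μ * (κ * D u)) (hv : 2 * s v ^ 2 ≤ μ * (κ * D v)) :
    Gains w s D κ μ {u, v} (w u v + w v u) := by
  refine ⟨fun x => if x = u then 1 else -1, fun x => by by_cases h : x = u <;> simp [h], ?_⟩
  have h2 : (s u + -s v) ^ 2 / μ ≤ κ * (D u + D v) := by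
    rw [div_le_iff₀ hμ]
    nlinarith [sq_nonneg (s u + s v)]
  simp only [signCut, signSum, sum_pair huv, hw, if_true, huv.symm, if_false]
  simp only [mul_one, mul_neg]
  linarith

theorem gains_star (hw : ∀ v, w v v = 0) (hμ : 0 < μ) (hκ : 0 < κ)
    {Γ Γ' : ℝ} {p : V} {L : Finset V} (hp : p ∉ L)
    (hind : ∀ u ∈ L, ∀ v ∈ L, w u v = 0) (hadj : ∀ v ∈ L, 1 ≤ w v p + w p v)
    (hs : ∀ v ∈ insert p L, 2 * s v ^ 2 ≤ μ * (κ * D v)) (hsD : ∀ v ∈ insert p L, |s v| ≤ D v)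
    (hL : (L.card : ℝ) ≤ Γ) (hΓ : 2 * Γ ≤ κ * Γ') (hΓ' : 2 * Γ' ≤ κ * μ) :
    Gains w s D κ μ (insert p L) L.card := by
  have hDL : ∀ v ∈ L, |s v| ≤ D v := fun v hv => hsD v (mem_insert_of_mem hv)
  have hD0 : 0 ≤ ∑ v ∈ L, D v := sum_nonneg fun v hv => (abs_nonneg _).trans (hDL v hv)
  have hDp : 0 ≤ D p := (abs_nonneg _).trans (hsD p (mem_insert_self _ _))
  rcases le_total (∑ v ∈ L, D v) Γ' with h | h
  · refine ⟨fun x => if x = p then 1 else -1, fun x => by by_cases h : x = p <;> simp [h], ?_⟩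
    have hne : ∀ v ∈ L, v ≠ p := fun v hv h => hp (h ▸ hv)
    have hsum : signSum s (fun x => if x = p then 1 else -1) (insert p L)
        = s p - ∑ v ∈ L, s v := by
      rw [signSum, sum_insert hp, sub_eq_add_neg, ← sum_neg_distrib]
      congr 1
      · simp
      · exact sum_congr rfl fun v hv => by simp [hne v hv]
    have hcut : (L.card : ℝ) ≤ signCut w (fun x => if x = p then 1 else -1) (insert p L) := by
      rw [insert_eq, signCut_union (by simpa using hp)]
      have h1 : signCut w (fun x => if x = p then 1 else -1) {p} = 0 := by simp [signCut, hw]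
      have h2 : signCut w (fun x => if x = p then 1 else -1) L = 0 := by
        rw [signCut, neg_eq_zero]
        exact sum_eq_zero fun u hu => sum_eq_zero fun v hv => by simp [hind u hu v hv]
      rw [h1, h2, sum_singleton, zero_add, zero_sub, ← sum_neg_distrib, card_eq_sum_ones]
      push_cast
      refine sum_le_sum fun v hv => ?_
      simp only [hne v hv, if_true, if_false]
      linarith [hadj v hv]
    have hsL : |∑ v ∈ L, s v| ≤ ∑ v ∈ L, D v :=
      (abs_sum_le_sum_abs _ _).trans (sum_le_sum hDL)
    have hsq : (∑ v ∈ L, s v) ^ 2 ≤ Γ' * ∑ v ∈ L, D v := by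
      rw [← sq_abs]
      nlinarith [abs_nonneg (∑ v ∈ L, s v)]
    have hpen : (s p - ∑ v ∈ L, s v) ^ 2 / μ ≤ κ * (D p + ∑ v ∈ L, D v) := by
      rw [div_le_iff₀ hμ]
      nlinarith [sq_nonneg (s p + ∑ v ∈ L, s v), hs p (mem_insert_self _ _),
        mul_le_mul_of_nonneg_right hΓ' hD0]
    rw [hsum, sum_insert hp]
    linarith
  · refine (gains_sum_single hw _).mono ?_
    have h1 : ∀ v ∈ insert p L, κ / 2 * D v ≤ κ * D v - s v ^ 2 / μ := fun v hv => by
      have : s v ^ 2 / μ ≤ κ / 2 * D v := by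
        rw [div_le_iff₀ hμ]; nlinarith [hs v hv]
      linarith
    refine le_trans ?_ (sum_le_sum h1)
    rw [← mul_sum, sum_insert hp]
    nlinarith [mul_nonneg hκ.le hDp]

theorem gains_nonneg (hw : ∀ v, w v v = 0) (hμ : 0 < μ) {S : Finset V}
    (hs : ∀ v ∈ S, 2 * s v ^ 2 ≤ μ * (κ * D v)) : Gains w s D κ μ S 0 := by
  refine (gains_sum_single hw S).mono (sum_nonneg fun v hv => ?_)
  rw [sub_nonneg, div_le_iff₀ hμ]
  nlinarith [hs v hv, sq_nonneg (s v)]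

/-- Peeling a rooted forest: pairs of adjacent deepest siblings and stars of independent
deepest siblings give half a unit of gain per vertex that is not a root. -/
theorem gains_forest (hw : ∀ v, w v v = 0) (hμ : 0 < μ) (hκ : 0 < κ)
    {Γ Γ' : ℝ} (hΓ : 2 * Γ ≤ κ * Γ') (hΓ' : 2 * Γ' ≤ κ * μ)
    (hw1 : ∀ u v, w u v = 0 ∨ w u v = 1)
    (par : V → V) (lev : V → ℕ) (R : Finset V) (T : Finset V)
    (hpar : ∀ v ∈ T, v ∉ R → par v ∈ T ∧ 1 ≤ w v (par v) + w (par v) v ∧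
      lev v = lev (par v) + 1)
    (hs : ∀ v ∈ T, 2 * s v ^ 2 ≤ μ * (κ * D v)) (hsD : ∀ v ∈ T, |s v| ≤ D v)
    (hdeg : ∀ v ∈ T, ∀ L ⊆ T, (∀ u ∈ L, 1 ≤ w u v + w v u) → (L.card : ℝ) ≤ Γ) :
    Gains w s D κ μ T (((T.card : ℝ) - R.card) / 2) := by
  induction T using Finset.strongInduction with
  | H T ih =>
  by_cases hTR : T ⊆ R
  · have : (T.card : ℝ) ≤ R.card := by exact_mod_cast card_le_card hTR
    exact (gains_nonneg hw hμ hs).mono (by linarith)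
  obtain ⟨u, hu, hmax⟩ := exists_max_image (T \ R) lev (sdiff_nonempty.2 hTR)
  rw [mem_sdiff] at hu
  set p := par u with hp
  obtain ⟨hpT, -, hlu⟩ := hpar u hu.1 hu.2
  set L := (T \ R).filter fun v => par v = p with hL
  have memL : ∀ {v}, v ∈ L ↔ (v ∈ T ∧ v ∉ R) ∧ par v = p := by simp [hL]
  have hLT : L ⊆ T := fun v hv => (memL.1 hv).1.1
  have huL : u ∈ L := memL.2 ⟨hu, rfl⟩
  have hleaf : ∀ v ∈ T, v ∉ R → par v ∉ L := fun v hv hvR h => by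
    have h1 := hmax v (mem_sdiff.2 ⟨hv, hvR⟩)
    have h2 := (hpar v hv hvR).2.2
    obtain ⟨⟨h3, h4⟩, h5⟩ := memL.1 h
    have h6 := (hpar _ h3 h4).2.2
    rw [h5] at h6
    rw [← hp] at hlu
    omega
  have hrest : ∀ P ⊆ T, P.Nonempty → (∀ v ∈ T, v ∉ R → par v ∈ P → v ∈ P) →
      Gains w s D κ μ (T \ P) ((((T \ P).card : ℝ) - R.card) / 2) := by
    intro P hP hPne hcl
    refine ih _ (sdiff_ssubset hP hPne) (fun v hv hvR => ?_)
      (fun v hv => hs v (mem_sdiff.1 hv).1) (fun v hv => hsD v (mem_sdiff.1 hv).1)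
      (fun v hv L hL => hdeg v (mem_sdiff.1 hv).1 L (hL.trans sdiff_subset))
    rw [mem_sdiff] at hv
    obtain ⟨h1, h2⟩ := hpar v hv.1 hvR
    exact ⟨mem_sdiff.2 ⟨h1, fun h => hv.2 (hcl v hv.1 hvR h)⟩, h2⟩
  by_cases hind : ∀ x ∈ L, ∀ y ∈ L, w x y = 0
  · have hpL : p ∉ L := hleaf u hu.1 hu.2
    have hPT : insert p L ⊆ T := insert_subset hpT hLT
    have hadj : ∀ v ∈ L, 1 ≤ w v p + w p v := fun v hv => by
      obtain ⟨⟨h1, h2⟩, h3⟩ := memL.1 hv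
      simpa [h3] using (hpar v h1 h2).2.1
    have hstar := gains_star hw hμ hκ hpL hind hadj (fun v hv => hs v (hPT hv))
      (fun v hv => hsD v (hPT hv)) (hdeg p hpT L hLT hadj) hΓ hΓ'
    refine Gains.of_sdiff hPT (hrest _ hPT (insert_nonempty _ _) fun v hv hvR h => ?_) hstar ?_
    · rcases mem_insert.1 h with h | h
      · exact mem_insert_of_mem (memL.2 ⟨⟨hv, hvR⟩, h⟩)
      · exact absurd h (hleaf v hv hvR)
    · rw [cast_card_sdiff hPT, card_insert_of_notMem hpL]
      have : (1 : ℝ) ≤ L.card := by exact_mod_cast card_pos.2 ⟨u, huL⟩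
      push_cast
      linarith
  · push Not at hind
    obtain ⟨x, hx, y, hy, hxy⟩ := hind
    have hne : x ≠ y := by rintro rfl; exact hxy (hw x)
    have hPL : ({x, y} : Finset V) ⊆ L := by
      intro z hz
      simp only [mem_insert, mem_singleton] at hz
      rcases hz with rfl | rfl <;> assumption
    have hPT := hPL.trans hLT
    refine Gains.of_sdiff hPT (hrest _ hPT (insert_nonempty _ _) fun v hv hvR h =>
      absurd (hPL h) (hleaf v hv hvR))
      (gains_pair hw hμ hne (hs x (hLT hx)) (hs y (hLT hy))) ?_
    rw [cast_card_sdiff hPT, card_pair hne]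
    have h1 : w x y = 1 := (hw1 x y).resolve_left hxy
    have h2 : 0 ≤ w y x := by rcases hw1 y x with h | h <;> rw [h]; norm_num
    push_cast
    linarith

theorem gains_of_card_le_two (hw : ∀ v, w v v = 0) (hμ : 0 < μ) {P : Finset V}
    (hP : P.card ≤ 2) (hs : ∀ v ∈ P, 2 * s v ^ 2 ≤ μ * (κ * D v)) :
    Gains w s D κ μ P (∑ u ∈ P, ∑ v ∈ P, w u v) := by
  interval_cases h : P.card
  · rw [card_eq_zero] at h
    subst h
    simpa using gains_empty
  · obtain ⟨v, rfl⟩ := card_eq_one.1 h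
    simpa [hw] using gains_nonneg hw hμ hs
  · obtain ⟨u, v, huv, rfl⟩ := card_eq_two.1 h
    have := gains_pair (w := w) hw hμ huv (hs u (by simp)) (hs v (by simp))
    simpa [sum_pair huv, hw] using this

/-- A set of at most `q` vertices gains a `1 / q` fraction of its weight: embed it in `ZMod q` and
pair up the vertices with a given sum, for the best choice of the sum. -/
theorem gains_small (hw : ∀ v, w v v = 0) (hw0 : ∀ u v, 0 ≤ w u v) (hμ : 0 < μ) {q : ℕ}
    (hq : 0 < q) {S : Finset V} (hS : S.card ≤ q)
    (hs : ∀ v ∈ S, 2 * s v ^ 2 ≤ μ * (κ * D v)) :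
    Gains w s D κ μ S ((∑ u ∈ S, ∑ v ∈ S, w u v) / q) := by
  have : NeZero q := ⟨hq.ne'⟩
  obtain ⟨φ, -, hφ⟩ := S.finite_toSet.exists_injOn_of_encard_le
    (t := (Set.univ : Set (ZMod q))) (by simpa using hS)
  obtain ⟨c, hc⟩ : ∃ c : ZMod q, (∑ u ∈ S, ∑ v ∈ S, w u v) / q ≤
      ∑ u ∈ S, ∑ v ∈ S, if φ u + φ v = c then w u v else 0 := by
    by_contra! hcon
    have h1 := sum_lt_sum_of_nonempty (s := (univ : Finset (ZMod q))) univ_nonempty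
      fun c _ => hcon c
    rw [sum_comm] at h1
    have h2 : ∀ u ∈ S, ∑ c : ZMod q, ∑ v ∈ S, (if φ u + φ v = c then w u v else 0)
        = ∑ v ∈ S, w u v := fun u _ => by rw [sum_comm]; simp
    rw [sum_congr rfl h2] at h1
    simp only [sum_const, card_univ, ZMod.card, nsmul_eq_mul] at h1
    have : (q : ℝ) ≠ 0 := by exact_mod_cast hq.ne'
    rw [mul_div_cancel₀ _ this] at h1
    exact lt_irrefl _ h1
  set f : V → Sym2 (ZMod q) := fun v => s(φ v, c - φ v) with hf
  have hfib := gains_fibers (w := w) (s := s) (D := D) (κ := κ) (μ := μ) f S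
    (fun i => ∑ u ∈ S with f u = i, ∑ v ∈ S with f v = i, w u v) (S.image f) fun i _ => by
      refine gains_of_card_le_two hw hμ ?_ fun v hv => hs v (mem_filter.1 hv).1
      induction i using Sym2.ind with
      | h a b =>
      refine (card_le_card_of_injOn φ (t := {a, b}) (fun v hv => ?_)
        (hφ.mono fun v hv => (mem_filter.1 hv).1)).trans card_le_two
      have := (mem_filter.1 hv).2
      simp only [hf, Sym2.eq_iff] at this
      simp only [coe_insert, coe_singleton, Set.mem_insert_iff, Set.mem_singleton_iff]
      tauto
  have hSf : (S.filter fun v => f v ∈ S.image f) = S :=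
    filter_true_of_mem fun v hv => mem_image_of_mem f hv
  rw [hSf] at hfib
  refine hfib.mono (hc.trans ?_)
  rw [← sum_fiberwise_of_maps_to (fun u hu => mem_image_of_mem f hu)]
  refine sum_le_sum fun i _ => sum_le_sum fun u hu => ?_
  rw [sum_filter]
  refine sum_le_sum fun v _ => ?_
  have hui := (mem_filter.1 hu).2
  split_ifs with h1 h2 h2
  · exact le_rfl
  · refine absurd (?_ : f v = i) h2
    rw [← hui, hf]
    simp only [Sym2.eq_iff]
    right
    constructor
    · rw [← h1]; ring
    · rw [← h1]; ring
  · exact hw0 u v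
  · exact le_rfl

theorem gains_reachable (hw : ∀ v, w v v = 0) (hμ : 0 < μ) (hκ : 0 < κ)
    {Γ Γ' : ℝ} (hΓ : 2 * Γ ≤ κ * Γ') (hΓ' : 2 * Γ' ≤ κ * μ)
    (hw1 : ∀ u v, w u v = 0 ∨ w u v = 1) (H : SimpleGraph V)
    (hH : ∀ u v, H.Adj u v → 1 ≤ w u v + w v u) (r : V) (T : Finset V)
    (hT : ∀ v, v ∈ T ↔ H.Reachable v r)
    (hs : ∀ v ∈ T, 2 * s v ^ 2 ≤ μ * (κ * D v)) (hsD : ∀ v ∈ T, |s v| ≤ D v)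
    (hdeg : ∀ v ∈ T, ∀ L ⊆ T, (∀ u ∈ L, 1 ≤ w u v + w v u) → (L.card : ℝ) ≤ Γ) :
    Gains w s D κ μ T (((T.card : ℝ) - 1) / 2) := by
  have hex : ∀ v, ∃ p, v ∈ T → v ≠ r →
      p ∈ T ∧ 1 ≤ w v p + w p v ∧ H.dist v r = H.dist p r + 1 := by
    intro v
    by_cases hv : v ∈ T ∧ v ≠ r
    · obtain ⟨q, hq⟩ := ((hT v).1 hv.1).exists_walk_length_eq_dist
      cases q with
      | nil => exact absurd rfl hv.2
      | @cons _ p _ hadj q =>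
        refine ⟨p, fun _ _ => ⟨(hT p).2 q.reachable, hH _ _ hadj, ?_⟩⟩
        obtain ⟨q', hq'⟩ := q.reachable.exists_walk_length_eq_dist
        have h1 := SimpleGraph.dist_le q
        have h2 := SimpleGraph.dist_le (SimpleGraph.Walk.cons hadj q')
        rw [SimpleGraph.Walk.length_cons] at hq h2
        omega
    · exact ⟨v, fun h h' => absurd ⟨h, h'⟩ hv⟩
  choose par hpar using hex
  simpa using gains_forest hw hμ hκ hΓ hΓ' hw1 par (fun v => H.dist v r) {r} T
    (fun v hv hvr => hpar v hv (by simpa using hvr)) hs hsD hdeg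

/-- The vertices of `Y` gain, component by component, enough to pay for every vertex whose
out-weight inside `Y`, together with an external contribution `b`, is at least `d - 1`. -/
theorem gains_of_outweight (hw : ∀ v, w v v = 0) (hμ : 0 < μ) (hκ : 0 < κ)
    {Γ Γ' : ℝ} (hΓ : 2 * Γ ≤ κ * Γ') (hΓ' : 2 * Γ' ≤ κ * μ)
    (hw1 : ∀ u v, w u v = 0 ∨ w u v = 1) (Y : Finset V)
    (hs : ∀ v ∈ Y, 2 * s v ^ 2 ≤ μ * (κ * D v)) (hsD : ∀ v ∈ Y, |s v| ≤ D v)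
    (hdeg : ∀ v ∈ Y, ∀ L ⊆ Y, (∀ u ∈ L, 1 ≤ w u v + w v u) → (L.card : ℝ) ≤ Γ)
    {d : ℕ} (hd : 1 ≤ d) (b : V → ℝ) (hb : ∀ v ∈ Y, 0 ≤ b v)
    (hout : ∀ v ∈ Y, (d : ℝ) - 1 ≤ ∑ u ∈ Y, w v u + b v) :
    Gains w s D κ μ Y
      (∑ v ∈ Y, (2 * (d : ℝ) - 2 - ∑ u ∈ Y, w v u - 2 * b v) / (2 * d - 1)) := by
  classical
  have hd' : (1 : ℝ) ≤ d := by exact_mod_cast hd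
  have hq : (0 : ℝ) < 2 * d - 1 := by linarith
  have hw0 : ∀ u v, 0 ≤ w u v := fun u v => by rcases hw1 u v with h | h <;> simp [h]
  let H : SimpleGraph V :=
    { Adj := fun u v => (u ∈ Y ∧ v ∈ Y) ∧ 1 ≤ w u v + w v u
      symm := ⟨fun u v h => ⟨h.1.symm, by linarith [h.2]⟩⟩
      loopless := ⟨fun v h => by have := h.2; simp only [hw] at this; norm_num at this⟩ }
  have hfib := gains_fibers (w := w) (s := s) (D := D) (κ := κ) (μ := μ) H.connectedComponentMk Y
    (fun c => ∑ v ∈ Y with H.connectedComponentMk v = c,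
      (2 * (d : ℝ) - 2 - ∑ u ∈ Y, w v u - 2 * b v) / (2 * d - 1))
    (Y.image H.connectedComponentMk) fun c hc => by
      obtain ⟨r, hr, rfl⟩ := mem_image.1 hc
      set T := Y.filter fun v => H.connectedComponentMk v = H.connectedComponentMk r with hTdef
      have hTY : T ⊆ Y := filter_subset _ _
      have hT : ∀ v, v ∈ T ↔ H.Reachable v r := fun v => by
        rw [hTdef, mem_filter, SimpleGraph.ConnectedComponent.eq]
        refine ⟨fun h => h.2, fun h => ⟨?_, h⟩⟩
        obtain ⟨q⟩ := h
        cases q with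
        | nil => exact hr
        | cons hadj _ => exact hadj.1.1
      have houtT : ∀ v ∈ T, ∑ u ∈ Y, w v u = ∑ u ∈ T, w v u := fun v hv => by
        refine (sum_subset hTY fun u huY huT => ?_).symm
        refine (hw1 v u).resolve_right fun h1 => huT ((hT u).2 ?_)
        have hadj : H.Adj u v := ⟨⟨huY, hTY hv⟩, by linarith [hw0 u v]⟩
        exact hadj.reachable.trans ((hT v).1 hv)
      rw [← sum_div]
      rcases le_total T.card (2 * d - 1) with hcard | hcard
      · refine (gains_small hw hw0 hμ (by omega) hcard fun v hv => hs v (hTY hv)).mono ?_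
        rw [Nat.cast_sub (by omega)]
        push_cast
        refine div_le_div_of_nonneg_right (sum_le_sum fun v hv => ?_) hq.le
        rw [← houtT v hv]
        linarith [hout v (hTY hv)]
      · refine (gains_reachable hw hμ hκ hΓ hΓ' hw1 H (fun u v h => h.2) r T hT
          (fun v hv => hs v (hTY hv)) (fun v hv => hsD v (hTY hv))
          fun v hv L hL => hdeg v (hTY hv) L (hL.trans hTY)).mono ?_
        have h1 : ∑ v ∈ T, (2 * (d : ℝ) - 2 - ∑ u ∈ Y, w v u - 2 * b v)
            ≤ ∑ _v ∈ T, ((d : ℝ) - 1) := sum_le_sum fun v hv => by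
          linarith [hout v (hTY hv), hb v (hTY hv)]
        rw [sum_const, nsmul_eq_mul] at h1
        have h2 : ((2 * d - 1 : ℕ) : ℝ) ≤ T.card := by exact_mod_cast hcard
        rw [Nat.cast_sub (by omega)] at h2
        push_cast at h2
        rw [div_le_iff₀ hq]
        nlinarith
  convert hfib using 1
  · exact (filter_true_of_mem fun v hv => mem_image_of_mem _ hv).symm
  · exact (sum_fiberwise_of_maps_to (g := H.connectedComponentMk)
      (fun u hu => mem_image_of_mem _ hu) _).symm

end Gains

/-- If a signed sum cannot be made smaller than `θ` in absolute value and only the term at `x`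
reaches `θ`, then `θ` is at most the excess of that term over all the others together. -/
theorem le_abs_sub_sum_abs_of_forall_signing {V : Type} [DecidableEq V] {s : V → ℝ} {θ : ℝ}
    {X : Finset V} {x : V} (hx : x ∈ X)
    (hmin : ∀ σ : V → ℝ, (∀ v, σ v = 1 ∨ σ v = -1) → θ ≤ |signSum s σ X|)
    (hθx : θ ≤ |s x|) (hθ : ∀ y ∈ X.erase x, |s y| < θ) :
    θ ≤ |s x| - ∑ y ∈ X.erase x, |s y| := by
  have key : ∀ R ⊆ X.erase x,
      θ ≤ |s x| + ∑ y ∈ X.erase x, if y ∈ R then -|s y| else |s y| := by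
    intro R
    induction R using Finset.induction_on with
    | empty =>
      intro _
      have : 0 ≤ ∑ y ∈ X.erase x, |s y| := sum_nonneg fun y _ => abs_nonneg _
      simpa using by linarith
    | insert z R hz ih =>
      intro hR
      have hzX : z ∈ X.erase x := hR (mem_insert_self _ _)
      have hprev := ih ((subset_insert _ _).trans hR)
      have hstep : ∑ y ∈ X.erase x, (if y ∈ insert z R then -|s y| else |s y|)
          = ∑ y ∈ X.erase x, (if y ∈ R then -|s y| else |s y|) - 2 * |s z| := by
        rw [← add_sum_erase _ _ hzX,
          ← add_sum_erase (X.erase x) (fun y => if y ∈ R then _ else _) hzX,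
          if_pos (mem_insert_self _ _), if_neg hz]
        have : ∀ y ∈ (X.erase x).erase z, (if y ∈ insert z R then -|s y| else |s y|)
            = if y ∈ R then -|s y| else |s y| := fun y hy => by
          simp [mem_insert, ne_of_mem_erase hy]
        rw [sum_congr rfl this]
        ring
      have habs := hmin
        (fun y => (if 0 ≤ s y then 1 else -1) * if y ∈ insert z R then -1 else 1) fun y => by
          split_ifs <;> simp
      have hxR : x ∉ insert z R := fun h => notMem_erase x X (hR h)
      have hval : signSum s
          (fun y => (if 0 ≤ s y then 1 else -1) * if y ∈ insert z R then -1 else 1) X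
          = |s x| + ∑ y ∈ X.erase x, if y ∈ insert z R then -|s y| else |s y| := by
        have hterm : ∀ y, s y * (if 0 ≤ s y then 1 else -1) = |s y| := fun y => by
          split_ifs with h
          · rw [abs_of_nonneg h, mul_one]
          · rw [abs_of_neg (not_le.1 h), mul_neg_one]
        rw [signSum, ← add_sum_erase _ _ hx]
        congr 1
        · rw [if_neg hxR, mul_one, hterm]
        · refine sum_congr rfl fun y _ => ?_
          rw [← mul_assoc, hterm]
          split_ifs <;> ring
      rw [hval] at habs
      have hlt := hθ z hzX
      rcases le_abs.1 habs with h | h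
      · exact h
      · rw [hstep] at h ⊢
        linarith
  have := key _ subset_rfl
  rw [sum_congr rfl fun y hy => if_pos hy, sum_neg_distrib] at this
  linarith

section Digraph

variable {V : Type} (A : V → V → Prop) [DecidableRel A]

/-- The indicator of an arc. -/
def arcWeight (u v : V) : ℝ := if A u v then 1 else 0

theorem arcWeight_nonneg (u v : V) : 0 ≤ arcWeight A u v := by
  unfold arcWeight; split_ifs <;> norm_num

theorem arcWeight_le_one (u v : V) : arcWeight A u v ≤ 1 := by
  unfold arcWeight; split_ifs <;> norm_num

variable [Fintype V]

/-- Outdegree minus indegree. -/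
def surplus (v : V) : ℝ := (outDeg A v : ℝ) - inDeg A v

theorem outDeg_eq_sum (v : V) : (outDeg A v : ℝ) = ∑ u, arcWeight A v u := by
  simp [outDeg, arcWeight]

theorem inDeg_eq_sum (v : V) : (inDeg A v : ℝ) = ∑ u, arcWeight A u v := by
  simp [inDeg, arcWeight]

theorem cast_sVal (v : V) : (sVal A v : ℝ) = |surplus A v| := by
  simp [sVal, surplus, abs_eq_max_neg]

theorem abs_surplus_le (v : V) : |surplus A v| ≤ deg A v := by
  have h1 : (0 : ℝ) ≤ outDeg A v := Nat.cast_nonneg _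
  have h2 : (0 : ℝ) ≤ inDeg A v := Nat.cast_nonneg _
  rw [surplus, deg, abs_le]
  push_cast
  constructor <;> linarith

variable [DecidableEq V]

theorem dArcs_eq_sum (S T : Finset V) :
    (dArcs A S T : ℝ) = ∑ u ∈ S, ∑ v ∈ T, arcWeight A u v := by
  rw [dArcs, ← sum_product', card_filter]
  push_cast
  rfl

theorem sum_deg_eq : ∑ v, (deg A v : ℝ) = 2 * dArcs A univ univ := by
  simp only [deg, Nat.cast_add, sum_add_distrib, outDeg_eq_sum, inDeg_eq_sum, dArcs_eq_sum]
  rw [sum_comm (f := fun v u => arcWeight A u v)]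
  ring

/-- The bipartition induced by a signing. -/
theorem exists_bipartition_of_signing {σ : V → ℝ} (hσ : ∀ v, σ v = 1 ∨ σ v = -1) :
    ∃ V₁ V₂ : Finset V, V₁ ∪ V₂ = univ ∧ Disjoint V₁ V₂ ∧
      ((dArcs A univ univ : ℝ) + signCut (arcWeight A) σ univ - |signSum (surplus A) σ univ|) / 4 ≤
        min (dArcs A V₁ V₂ : ℝ) (dArcs A V₂ V₁ : ℝ) := by
  classical
  refine ⟨univ.filter fun v => σ v = 1, univ.filter fun v => ¬ σ v = 1,
    filter_union_filter_not_eq _ _, disjoint_filter_filter_not _ _ _, ?_⟩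
  have hne : ¬ ((-1 : ℝ) = 1) := by norm_num
  have h12 : (dArcs A (univ.filter fun v => σ v = 1) (univ.filter fun v => ¬ σ v = 1) : ℝ)
      = ∑ u, ∑ v, arcWeight A u v * ((1 + σ u) / 2) * ((1 - σ v) / 2) := by
    rw [dArcs_eq_sum, sum_filter]
    refine sum_congr rfl fun u _ => ?_
    rw [sum_filter]
    rcases hσ u with hu | hu
    · rw [if_pos hu]
      refine sum_congr rfl fun v _ => ?_
      rcases hσ v with hv | hv <;> simp [hu, hv, hne]
    · simp [hu, hne]
  have h21 : (dArcs A (univ.filter fun v => ¬ σ v = 1) (univ.filter fun v => σ v = 1) : ℝ)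
      = ∑ u, ∑ v, arcWeight A u v * ((1 - σ u) / 2) * ((1 + σ v) / 2) := by
    rw [dArcs_eq_sum, sum_filter]
    refine sum_congr rfl fun u _ => ?_
    rw [sum_filter]
    rcases hσ u with hu | hu
    · simp [hu]
    · rw [if_pos (by rw [hu]; exact hne)]
      refine sum_congr rfl fun v _ => ?_
      rcases hσ v with hv | hv <;> simp [hu, hv, hne]
  have hsum : signSum (surplus A) σ univ
      = ∑ u, ∑ v, arcWeight A u v * (σ u - σ v) := by
    simp only [signSum, surplus, outDeg_eq_sum, inDeg_eq_sum, sub_mul, mul_sub, sum_sub_distrib,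
      sum_mul]
    congr 1
    exact sum_comm
  have e1 : (dArcs A univ univ : ℝ) + signCut (arcWeight A) σ univ
      + signSum (surplus A) σ univ
      = 4 * ∑ u, ∑ v, arcWeight A u v * ((1 + σ u) / 2) * ((1 - σ v) / 2) := by
    rw [hsum, dArcs_eq_sum, signCut]
    simp only [mul_sum, ← sum_neg_distrib, ← sum_add_distrib]
    exact sum_congr rfl fun u _ => sum_congr rfl fun v _ => by ring
  have e2 : (dArcs A univ univ : ℝ) + signCut (arcWeight A) σ univ
      - signSum (surplus A) σ univ
      = 4 * ∑ u, ∑ v, arcWeight A u v * ((1 - σ u) / 2) * ((1 + σ v) / 2) := by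
    rw [hsum, dArcs_eq_sum, signCut]
    simp only [mul_sum, ← sum_neg_distrib, ← sum_add_distrib, ← sum_sub_distrib]
    exact sum_congr rfl fun u _ => sum_congr rfl fun v _ => by ring
  rw [h12, h21, le_min_iff]
  constructor
  · linarith [neg_abs_le (signSum (surplus A) σ univ)]
  · linarith [le_abs_self (signSum (surplus A) σ univ)]

variable {A} {X Y : Finset V}

theorem arcWeight_eq_zero_of_dArcs (hX : dArcs A X X = 0) {u v : V} (hu : u ∈ X) (hv : v ∈ X) :
    arcWeight A u v = 0 := by
  rw [dArcs, card_eq_zero, filter_eq_empty_iff] at hX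
  exact if_neg (hX (mem_product.2 ⟨hu, hv⟩ : (u, v) ∈ X ×ˢ X))

theorem sum_univ_eq_of_partition (hXY : X ∪ Y = univ) (hdis : Disjoint X Y) (f : V → ℝ) :
    ∑ v, f v = ∑ v ∈ X, f v + ∑ v ∈ Y, f v := by
  rw [← hXY, sum_union hdis]

theorem surplus_of_mem (hXY : X ∪ Y = univ) (hdis : Disjoint X Y) (hX : dArcs A X X = 0) {v : V}
    (hv : v ∈ X) : surplus A v = ∑ u ∈ Y, arcWeight A v u - ∑ u ∈ Y, arcWeight A u v := by
  rw [surplus, outDeg_eq_sum, inDeg_eq_sum, sum_univ_eq_of_partition hXY hdis,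
    sum_univ_eq_of_partition hXY hdis,
    sum_eq_zero fun u hu => arcWeight_eq_zero_of_dArcs hX hv hu,
    sum_eq_zero fun u hu => arcWeight_eq_zero_of_dArcs hX hu hv]
  ring

theorem cast_gap (hXY : X ∪ Y = univ) (hdis : Disjoint X Y) (hX : dArcs A X X = 0)
    {X₁ : Finset V} (hX₁ : X₁ ⊆ X) {σ : V → ℝ} (h1 : ∀ v ∈ X₁, σ v = 1)
    (h2 : ∀ v ∈ X \ X₁, σ v = -1) :
    (gap A X₁ (X \ X₁) Y : ℝ) = signSum (surplus A) σ X := by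
  have e1 : ∑ v ∈ X₁, surplus A v * σ v = dArcs A X₁ Y - dArcs A Y X₁ := by
    rw [dArcs_eq_sum, dArcs_eq_sum, sum_comm (s := Y), ← sum_sub_distrib]
    exact sum_congr rfl fun v hv => by
      rw [h1 v hv, mul_one, surplus_of_mem hXY hdis hX (hX₁ hv)]
  have e2 : ∑ v ∈ X \ X₁, surplus A v * σ v = dArcs A Y (X \ X₁) - dArcs A (X \ X₁) Y := by
    rw [dArcs_eq_sum, dArcs_eq_sum, sum_comm (s := Y), ← sum_sub_distrib]
    exact sum_congr rfl fun v hv => by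
      rw [h2 v hv, surplus_of_mem hXY hdis hX (mem_sdiff.1 hv).1]
      ring
  rw [signSum, ← sum_sdiff hX₁, e1, e2, gap]
  push_cast
  ring

/-- When `X` has a unique vertex `x` of surplus at least the minimum gap `θ`, that gap is paid for
by the arcs of the digraph and the gain available inside `Y`. -/
theorem gap_le_of_unique_huge (hXY : X ∪ Y = univ) (hdis : Disjoint X Y) (hX : dArcs A X X = 0)
    {d : ℕ} (hd : 1 ≤ d) {θ : ℝ} {x : V} (hx : x ∈ X)
    (hθ : θ ≤ |surplus A x| - ∑ y ∈ X.erase x, |surplus A y|) :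
    (2 * d - 1) * θ ≤ ∑ v ∈ Y, (2 * (d : ℝ) - 2 - ∑ u ∈ Y, arcWeight A v u
      - 2 * ∑ u ∈ X.erase x, arcWeight A v u) + dArcs A univ univ := by
  have hd' : (1 : ℝ) ≤ d := by exact_mod_cast hd
  set R := X.erase x with hR
  set outR := ∑ u ∈ R, ∑ v ∈ Y, arcWeight A u v with houtR
  set inR := ∑ v ∈ Y, ∑ u ∈ R, arcWeight A v u with hinR
  set outx := ∑ v ∈ Y, arcWeight A x v with houtx
  set inx := ∑ v ∈ Y, arcWeight A v x with hinx
  set E := ∑ v ∈ Y, ∑ u ∈ Y, arcWeight A v u with hE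
  have hm : (dArcs A univ univ : ℝ) = E + outx + inx + outR + inR := by
    have hsplit : ∀ v, ∑ u ∈ X, arcWeight A v u
        = arcWeight A v x + ∑ u ∈ R, arcWeight A v u := fun v => (add_sum_erase _ _ hx).symm
    have hXout : ∀ v ∈ X, ∑ u, arcWeight A v u = ∑ u ∈ Y, arcWeight A v u := fun v hv => by
      rw [sum_univ_eq_of_partition hXY hdis,
        sum_eq_zero fun u hu => arcWeight_eq_zero_of_dArcs hX hv hu, zero_add]
    rw [dArcs_eq_sum, sum_univ_eq_of_partition hXY hdis, sum_congr rfl hXout,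
      ← add_sum_erase _ _ hx]
    simp only [sum_univ_eq_of_partition hXY hdis, hsplit, sum_add_distrib]
    ring
  have hnn : ∀ u v, 0 ≤ arcWeight A u v := arcWeight_nonneg A
  have houtx0 : 0 ≤ outx := sum_nonneg fun v _ => hnn _ _
  have hinx0 : 0 ≤ inx := sum_nonneg fun v _ => hnn _ _
  have houtxN : outx ≤ Y.card := by
    simpa using sum_le_sum fun v (_ : v ∈ Y) => arcWeight_le_one A x v
  have hinxN : inx ≤ Y.card := by
    simpa using sum_le_sum fun v (_ : v ∈ Y) => arcWeight_le_one A v x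
  have hRsum : inR - outR ≤ ∑ y ∈ R, |surplus A y| := by
    rw [hinR, sum_comm, houtR, ← sum_sub_distrib]
    refine sum_le_sum fun y hy => ?_
    rw [surplus_of_mem hXY hdis hX (mem_of_mem_erase hy)]
    exact (neg_sub _ _).symm.le.trans (neg_le_abs _)
  have hR0 : 0 ≤ ∑ y ∈ R, |surplus A y| := sum_nonneg fun y _ => abs_nonneg _
  have hsx : surplus A x = outx - inx := surplus_of_mem hXY hdis hX hx
  have hrhs : ∑ v ∈ Y, (2 * (d : ℝ) - 2 - ∑ u ∈ Y, arcWeight A v u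
      - 2 * ∑ u ∈ R, arcWeight A v u) = (2 * d - 2) * Y.card - E - 2 * inR := by
    simp only [sum_sub_distrib, ← mul_sum, sum_const, nsmul_eq_mul]
    ring
  rw [hrhs, hm]
  have hpen : (2 * (d : ℝ) - 1) * θ ≤ (2 * d - 1) * |surplus A x| - (inR - outR) := by
    nlinarith
  have hbig : (2 * (d : ℝ) - 1) * |surplus A x| ≤ (2 * d - 2) * Y.card + (outx + inx) := by
    rw [hsx]
    rcases abs_cases (outx - inx) with ⟨h, -⟩ | ⟨h, -⟩ <;> rw [h] <;> nlinarith
  linarith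

end Digraph

/-- Proposition 4.3(2): a unique huge vertex. -/
theorem stmt15 (d : ℕ) (hd : 4 ≤ d) (C ε : ℝ) (hC : 0 < C) (hε : 0 < ε) :
    ∃ γ : ℝ, 0 < γ ∧ γ < ε ∧ ∃ n₀ : ℕ,
      ∀ (V : Type) [Fintype V] [DecidableEq V] (A : V → V → Prop) [DecidableRel A],
        (∀ v, ¬ A v v) →
        ∀ n m : ℕ, n = Fintype.card V → m = dArcs A Finset.univ Finset.univ →
        n₀ ≤ n → (m : ℝ) ≤ C * n →
        (∀ x, d ≤ outDeg A x) →
        ∀ X Y : Finset V, X ∪ Y = Finset.univ → Disjoint X Y →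
        (X.card : ℝ) ≤ γ * n → dArcs A X X = 0 →
        (∀ y ∈ Y, (deg A y : ℝ) ≤ γ * n) →
        ∀ θ : ℤ, IsLeast {t : ℤ | ∃ X₁ ⊆ X, t = |gap A X₁ (X \ X₁) Y|} θ →
        (X.filter fun x => θ ≤ sVal A x).card = 1 →
        ∃ V₁ V₂ : Finset V, V₁ ∪ V₂ = Finset.univ ∧ Disjoint V₁ V₂ ∧
          (((d : ℝ) - 1) / (2 * (2 * (d : ℝ) - 1)) - ε) * m ≤
            min (dArcs A V₁ V₂ : ℝ) (dArcs A V₂ V₁ : ℝ) := by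
  set e := min ε 1 with he
  have he0 : 0 < e := lt_min hε one_pos
  have he1 : e ≤ 1 := min_le_right _ _
  have heε : e ≤ ε := min_le_left _ _
  have he2 : e ^ 2 ≤ e := by nlinarith
  have he3 : e ^ 3 ≤ e ^ 2 := by nlinarith [sq_nonneg e]
  refine ⟨e ^ 3 / 4, by positivity, by linarith, 0, ?_⟩
  intro V _ _ A _ hloop n m hn hm _ _ hout X Y hXY hdis _ hX hdegY θ hθ hcard
  obtain ⟨x, hxf⟩ := card_eq_one.1 hcard
  have hxX : x ∈ X ∧ θ ≤ sVal A x := by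
    have : x ∈ X.filter fun x => θ ≤ sVal A x := by rw [hxf]; exact mem_singleton_self x
    exact mem_filter.1 this
  have hd1 : 1 ≤ d := by omega
  have hd' : (4 : ℝ) ≤ d := by exact_mod_cast hd
  have hq : (0 : ℝ) < 2 * d - 1 := by linarith
  have hn0 : (0 : ℝ) < n := by
    rw [hn]
    exact_mod_cast Fintype.card_pos_iff.2 ⟨x⟩
  have hnm : (n : ℝ) ≤ m := by
    have h1 : ∑ _v : V, (1 : ℝ) ≤ ∑ v, ∑ u, arcWeight A v u := sum_le_sum fun v _ => by
      rw [← outDeg_eq_sum]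
      exact_mod_cast hd1.trans (hout v)
    rw [hn, hm, dArcs_eq_sum]
    simpa using h1
  have hw : ∀ v, arcWeight A v v = 0 := fun v => if_neg (hloop v)
  have hw1 : ∀ u v, arcWeight A u v = 0 ∨ arcWeight A u v = 1 := fun u v => by
    unfold arcWeight; split_ifs <;> simp
  have hμ : 0 < e * n := by positivity
  have hdeg0 : ∀ v, (0 : ℝ) ≤ deg A v := fun v => Nat.cast_nonneg _
  have hgain := gains_of_outweight (w := arcWeight A) (s := surplus A)
    (D := fun v => (deg A v : ℝ)) (κ := e) (μ := e * n) (Γ := e ^ 3 / 4 * n)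
    (Γ' := e ^ 2 / 2 * n) hw hμ he0 (by nlinarith) (by nlinarith) hw1 Y
    (fun v hv => by
      have h1 := abs_surplus_le A v
      have h2 := hdegY v hv
      have h3 : surplus A v ^ 2 ≤ e ^ 3 / 4 * n * deg A v := by
        rw [← sq_abs]
        nlinarith [abs_nonneg (surplus A v), hdeg0 v]
      have h4 : e ^ 3 * (n * deg A v) ≤ e ^ 2 * (n * deg A v) :=
        mul_le_mul_of_nonneg_right he3 (mul_nonneg hn0.le (hdeg0 v))
      have h5 : 0 ≤ e ^ 3 * (n * deg A v) :=
        mul_nonneg (by positivity) (mul_nonneg hn0.le (hdeg0 v))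
      nlinarith)
    (fun v _ => abs_surplus_le A v)
    (fun v hv L _ hadj => by
      refine le_trans ?_ (hdegY v hv)
      have h1 : (L.card : ℝ) ≤ ∑ u ∈ L, (arcWeight A u v + arcWeight A v u) := by
        simpa using sum_le_sum hadj
      refine h1.trans ((sum_le_univ_sum_of_nonneg fun u =>
        add_nonneg (arcWeight_nonneg A u v) (arcWeight_nonneg A v u)).trans ?_)
      rw [sum_add_distrib, ← outDeg_eq_sum, ← inDeg_eq_sum, deg]
      push_cast
      linarith)
    hd1 (fun v => ∑ u ∈ X.erase x, arcWeight A v u)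
    (fun v _ => sum_nonneg fun u _ => arcWeight_nonneg A v u)
    (fun v _ => by
      have h1 : (d : ℝ) ≤ outDeg A v := by exact_mod_cast hout v
      rw [outDeg_eq_sum, sum_univ_eq_of_partition hXY hdis, ← add_sum_erase _ _ hxX.1] at h1
      linarith [arcWeight_le_one A v x])
  have hmin : ∀ σ : V → ℝ, (∀ v, σ v = 1 ∨ σ v = -1) → (θ : ℝ) ≤ |signSum (surplus A) σ X| := by
    classical
    intro σ hσ
    rw [← cast_gap hXY hdis hX (filter_subset (fun v => σ v = 1) X)
      (fun v hv => (mem_filter.1 hv).2) fun v hv => (hσ v).resolve_left fun h =>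
        (mem_sdiff.1 hv).2 (mem_filter.2 ⟨(mem_sdiff.1 hv).1, h⟩)]
    exact_mod_cast hθ.2 ⟨_, filter_subset _ X, rfl⟩
  have hθx := le_abs_sub_sum_abs_of_forall_signing hxX.1 hmin
    (by rw [← cast_sVal]; exact_mod_cast hxX.2)
    (fun y hy => by
      rw [← cast_sVal]
      by_contra! hcon
      have : y ∈ X.filter fun x => θ ≤ sVal A x :=
        mem_filter.2 ⟨mem_of_mem_erase hy, by exact_mod_cast hcon⟩
      rw [hxf, mem_singleton] at this
      exact ne_of_mem_erase hy this)
  have hpay := gap_le_of_unique_huge hXY hdis hX hd1 hxX.1 hθx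
  obtain ⟨X₁, hX₁, hθgap⟩ := hθ.1
  obtain ⟨τ, hτ, hτgain⟩ := hgain
  obtain ⟨ρ, c, hρ, hc, hρX, hρY, hcut⟩ := exists_glued_signing (w := arcWeight A) hdis
    (σ := fun v => if v ∈ X₁ then 1 else -1) (fun v => by by_cases h : v ∈ X₁ <;> simp [h]) hτ 0
  obtain ⟨V₁, V₂, hV, hVd, hVmin⟩ := exists_bipartition_of_signing A hρ
  refine ⟨V₁, V₂, hV, hVd, le_trans ?_ hVmin⟩
  have hcutX : signCut (arcWeight A) (fun v => if v ∈ X₁ then 1 else -1) X = 0 := by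
    rw [signCut, neg_eq_zero]
    exact sum_eq_zero fun u hu => sum_eq_zero fun v hv => by
      simp [arcWeight_eq_zero_of_dArcs hX hu hv]
  have hsumX : |signSum (surplus A) (fun v => if v ∈ X₁ then 1 else -1) X| = θ := by
    rw [← cast_gap hXY hdis hX hX₁ (fun v hv => by simp [hv])
      (fun v hv => by simp [(mem_sdiff.1 hv).2]), hθgap]
    push_cast
    rfl
  have hsum : signSum (surplus A) ρ univ
      = signSum (surplus A) (fun v => if v ∈ X₁ then 1 else -1) X
        + c * signSum (surplus A) τ Y := by
    rw [← signSum_smul, ← signSum_congr hρX, ← signSum_congr hρY]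
    exact sum_univ_eq_of_partition hXY hdis _
  have habs : |signSum (surplus A) ρ univ| ≤ θ + |signSum (surplus A) τ Y| := by
    rw [hsum, ← hsumX]
    refine (abs_add_le _ _).trans_eq ?_
    rcases hc with rfl | rfl <;> simp
  have hpenalty : |signSum (surplus A) τ Y| - e * n / 4
      ≤ signSum (surplus A) τ Y ^ 2 / (e * n) := by
    rw [le_div_iff₀ hμ, ← sq_abs]
    nlinarith [sq_nonneg (|signSum (surplus A) τ Y| - e * n / 2)]
  have hdegsum : ∑ v ∈ Y, (deg A v : ℝ) ≤ 2 * m := by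
    rw [hm, ← sum_deg_eq]
    exact sum_le_univ_sum_of_nonneg hdeg0
  rw [hXY, hcutX] at hcut
  rw [← sum_div] at hτgain
  rw [← hm] at hpay ⊢
  set G := ∑ v ∈ Y, (2 * (d : ℝ) - 2 - ∑ u ∈ Y, arcWeight A v u
      - 2 * ∑ u ∈ X.erase x, arcWeight A v u) with hG
  have hθG : (θ : ℝ) ≤ G / (2 * d - 1) + m / (2 * d - 1) := by
    rw [← add_div, le_div_iff₀ hq]
    linarith
  have hconst : ((d : ℝ) - 1) / (2 * (2 * d - 1)) * m = m / 4 - m / (2 * d - 1) / 4 := by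
    obtain ⟨q, hqd⟩ : ∃ q : ℝ, q = 2 * d - 1 := ⟨_, rfl⟩
    rw [← hqd] at hq ⊢
    rw [show (d : ℝ) - 1 = (q - 1) / 2 by linarith]
    field_simp
    ring
  have hm0 : (0 : ℝ) ≤ m := Nat.cast_nonneg _
  have herr1 : e * ∑ v ∈ Y, (deg A v : ℝ) ≤ e * (2 * m) :=
    mul_le_mul_of_nonneg_left hdegsum he0.le
  have herr2 : e * n ≤ e * m := mul_le_mul_of_nonneg_left hnm he0.le
  have herr3 : e * m ≤ ε * m := mul_le_mul_of_nonneg_right heε hm0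
  have herr4 : 0 ≤ e * m := mul_nonneg he0.le hm0
  rw [sub_mul, hconst]
  linarith
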